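/- arXiv:0902.3345 — 4 statements merged into one kernel-verified Lean document; each statement's English description precedes it below -/
import Mathlib

section
/- A polynomial p ∈ ℝ[t_1,…,t_n] of degree d is an RZ_e-polynomial with respect to e ∈ ℝ^n if and only if its homogenization P(t,u) = u^d · p(t/u) ∈ ℝ[t_1,…,t_n,u] is hyperbolic with respect to (e,1) ∈ ℝ^{n+1}. -/
open MvPolynomial

/-- The univariate polynomial `s ↦ p(e + s·v)`. -/
noncomputable def lineEvalAdd {n : ℕ} (p : MvPolynomial (Fin n) ℝ) (e v : Fin n → ℝ) :
    Polynomial ℝ :=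
  MvPolynomial.aeval (fun i => Polynomial.C (e i) + Polynomial.C (v i) * Polynomial.X) p

/-- `p` is a real zero polynomial with respect to `e` (an RZ_e-polynomial): `p(e) > 0` and
for every `v ≠ 0` all complex zeros of `s ↦ p(e + s·v)` are real. -/
def IsRZ {n : ℕ} (p : MvPolynomial (Fin n) ℝ) (e : Fin n → ℝ) : Prop :=
  0 < eval e p ∧
    ∀ v : Fin n → ℝ, v ≠ 0 → ∀ z : ℂ,
      Polynomial.aeval z (lineEvalAdd p e v) = 0 → z.im = 0

/-- The univariate polynomial `s ↦ P(x - s·e)`. -/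
noncomputable def lineEvalSub {m : ℕ} (P : MvPolynomial (Fin m) ℝ) (x e : Fin m → ℝ) :
    Polynomial ℝ :=
  MvPolynomial.aeval (fun i => Polynomial.C (x i) - Polynomial.C (e i) * Polynomial.X) P

/-- `P` is hyperbolic with respect to `e`: `P(e) > 0` and for every `x ∈ ℝᵐ` all complex
zeros of the univariate polynomial `s ↦ P(x - s·e)` are real. -/
def IsHyperbolicWrt {m : ℕ} (P : MvPolynomial (Fin m) ℝ) (e : Fin m → ℝ) : Prop :=
  0 < eval e P ∧
    ∀ x : Fin m → ℝ, ∀ z : ℂ, Polynomial.aeval z (lineEvalSub P x e) = 0 → z.im = 0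

/-- The homogenization `P(t,u) = Σ_{i=0}^d p_{d-i}(t)·u^i` of a polynomial `p` of degree
`d` (here `p_j` is the homogeneous component of `p` of degree `j`, and `u` is the last
variable). -/
noncomputable def homog {n : ℕ} (p : MvPolynomial (Fin n) ℝ) (d : ℕ) :
    MvPolynomial (Fin (n + 1)) ℝ :=
  ∑ i ∈ Finset.range (d + 1),
    rename Fin.castSucc (homogeneousComponent i p) * X (Fin.last n) ^ (d - i)

/-!
Let `P = homog p d`. For a real point `(a, b)` and `w = b - z ≠ 0` we have
`(a, b) - z • (e, 1) = w • (e + w⁻¹ • (a - b • e), 1)`, so homogeneity gives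
`P ((a, b) - z • (e, 1)) = w ^ d * p (e + w⁻¹ • (a - b • e))`.
Hence, apart from the real number `z = b`, the zeros of `P` on the line through `(a, b)` in
direction `(e, 1)` correspond under the real Möbius map `z ↦ (b - z)⁻¹` to the nonzero zeros of
`p` on the line through `e` in direction `a - b • e`, and this map preserves being real.
-/

section Homogeneous

variable {σ R A : Type*} [CommSemiring R] [CommSemiring A] [Algebra R A]

lemma aeval_smul_of_isHomogeneous {φ : MvPolynomial σ R} {m : ℕ} (hφ : φ.IsHomogeneous m)
    (w : A) (g : σ → A) : aeval (w • g) φ = w ^ m * aeval g φ := by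
  rw [aeval_def, aeval_def, eval₂_eq, eval₂_eq, Finset.mul_sum]
  refine Finset.sum_congr rfl fun k hk => ?_
  have hdeg : ∑ j ∈ k.support, k j = m := by
    rw [← Finsupp.degree_apply, Finsupp.degree_eq_weight_one]
    exact hφ (mem_support_iff.mp hk)
  simp only [Pi.smul_apply, smul_eq_mul, mul_pow, Finset.prod_mul_distrib,
    Finset.prod_pow_eq_pow_sum, hdeg]
  exact mul_left_comm _ _ _

lemma sum_homogeneousComponent_of_totalDegree_le {p : MvPolynomial σ R} {d : ℕ}
    (hd : p.totalDegree ≤ d) : ∑ i ∈ Finset.range (d + 1), homogeneousComponent i p = p := by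
  conv_rhs => rw [← sum_homogeneousComponent p]
  refine (Finset.sum_subset (Finset.range_mono (by lia)) fun i _ hi => ?_).symm
  exact homogeneousComponent_eq_zero i p (by simpa using hi)

end Homogeneous

section Lines

variable {n : ℕ} {A : Type*}

lemma aeval_lineEvalAdd [CommSemiring A] [Algebra ℝ A] (p : MvPolynomial (Fin n) ℝ)
    (e v : Fin n → ℝ) (z : A) :
    Polynomial.aeval z (lineEvalAdd p e v) =
      aeval (fun i => algebraMap ℝ A (e i) + algebraMap ℝ A (v i) * z) p := by
  simp [lineEvalAdd, comp_aeval_apply]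

lemma aeval_lineEvalAdd_zero [CommSemiring A] [Algebra ℝ A] (p : MvPolynomial (Fin n) ℝ)
    (e : Fin n → ℝ) (z : A) :
    Polynomial.aeval z (lineEvalAdd p e 0) = algebraMap ℝ A (eval e p) := by
  simpa [aeval_lineEvalAdd, coe_aeval_eq_eval, Function.comp_def] using
    aeval_algebraMap_apply A e p

lemma aeval_lineEvalSub [CommRing A] [Algebra ℝ A] (p : MvPolynomial (Fin n) ℝ)
    (x e : Fin n → ℝ) (z : A) :
    Polynomial.aeval z (lineEvalSub p x e) =
      aeval (fun i => algebraMap ℝ A (x i) - algebraMap ℝ A (e i) * z) p := by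
  simp [lineEvalSub, comp_aeval_apply]

end Lines

section Homogenization

variable {n d : ℕ} {p : MvPolynomial (Fin n) ℝ}

lemma aeval_snoc_smul_homog {A : Type*} [CommSemiring A] [Algebra ℝ A]
    (hd : p.totalDegree ≤ d) (w : A) (g : Fin n → A) :
    aeval (Fin.snoc (w • g) w : Fin (n + 1) → A) (homog p d) = w ^ d * aeval g p := by
  have hterm : ∀ i ∈ Finset.range (d + 1),
      aeval (w • g) (homogeneousComponent i p) * w ^ (d - i) =
        w ^ d * aeval g (homogeneousComponent i p) := fun i hi => by
    rw [aeval_smul_of_isHomogeneous (homogeneousComponent_isHomogeneous i p), mul_right_comm,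
      pow_mul_pow_sub w (Finset.mem_range_succ_iff.mp hi)]
  calc aeval (Fin.snoc (w • g) w : Fin (n + 1) → A) (homog p d)
      = ∑ i ∈ Finset.range (d + 1), aeval (w • g) (homogeneousComponent i p) * w ^ (d - i) := by
        simp only [homog, map_sum, map_mul, map_pow, aeval_rename, aeval_X, Fin.snoc_last,
          Fin.snoc_comp_castSucc]
    _ = w ^ d * aeval g p := by
        rw [Finset.sum_congr rfl hterm, ← Finset.mul_sum, ← map_sum,
          sum_homogeneousComponent_of_totalDegree_le hd]

lemma eval_snoc_one_homog (hd : p.totalDegree ≤ d) (e : Fin n → ℝ) :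
    eval (Fin.snoc e 1 : Fin (n + 1) → ℝ) (homog p d) = eval e p := by
  simpa [coe_aeval_eq_eval] using aeval_snoc_smul_homog hd 1 e

variable {K : Type*} [Field K] [Algebra ℝ K]

lemma aeval_lineEvalSub_homog (hd : p.totalDegree ≤ d) (e a : Fin n → ℝ) (b : ℝ) {z : K}
    (hz : algebraMap ℝ K b - z ≠ 0) :
    Polynomial.aeval z (lineEvalSub (homog p d) (Fin.snoc a b) (Fin.snoc e 1)) =
      (algebraMap ℝ K b - z) ^ d *
        Polynomial.aeval (algebraMap ℝ K b - z)⁻¹ (lineEvalAdd p e (a - b • e)) := by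
  rw [aeval_lineEvalSub, aeval_lineEvalAdd, ← aeval_snoc_smul_homog hd]
  congr 2
  funext j
  refine Fin.lastCases (by simp) (fun j => ?_) j
  simp only [Fin.snoc_castSucc, Pi.smul_apply, Pi.sub_apply, smul_eq_mul, map_sub, map_mul]
  field_simp
  ring

lemma aeval_lineEvalSub_homog_eq_zero_iff (hd : p.totalDegree ≤ d) (e a : Fin n → ℝ) (b : ℝ)
    {z : K} (hz : algebraMap ℝ K b - z ≠ 0) :
    Polynomial.aeval z (lineEvalSub (homog p d) (Fin.snoc a b) (Fin.snoc e 1)) = 0 ↔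
      Polynomial.aeval (algebraMap ℝ K b - z)⁻¹ (lineEvalAdd p e (a - b • e)) = 0 := by
  rw [aeval_lineEvalSub_homog hd e a b hz, mul_eq_zero_iff_left (pow_ne_zero d hz)]

end Homogenization

section RealZeros

/-- All complex zeros of `f` are real, the condition that `IsRZ` and `IsHyperbolicWrt` impose on
restrictions to lines. The zero polynomial does not satisfy it. -/
def HasOnlyRealZeros (f : Polynomial ℝ) : Prop :=
  ∀ z : ℂ, Polynomial.aeval z f = 0 → z.im = 0

lemma complex_inv_im_eq_zero_iff {z : ℂ} : z⁻¹.im = 0 ↔ z.im = 0 := by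
  rw [← Complex.conj_eq_iff_im, ← Complex.conj_eq_iff_im, map_inv₀, inv_inj]

variable {n d : ℕ} {p : MvPolynomial (Fin n) ℝ}

lemma isRZ_iff_forall_hasOnlyRealZeros {e : Fin n → ℝ} :
    IsRZ p e ↔ 0 < eval e p ∧ ∀ v : Fin n → ℝ, HasOnlyRealZeros (lineEvalAdd p e v) := by
  refine and_congr_right fun hpos => ⟨fun hreal v z hz => ?_, fun hreal v _ => hreal v⟩
  rcases eq_or_ne v 0 with rfl | hv
  · rw [aeval_lineEvalAdd_zero, map_eq_zero] at hz
    exact absurd hz hpos.ne'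
  · exact hreal v hv z hz

lemma hasOnlyRealZeros_lineEvalSub_homog_iff (hd : p.totalDegree ≤ d) (e a : Fin n → ℝ)
    (b : ℝ) :
    HasOnlyRealZeros (lineEvalSub (homog p d) (Fin.snoc a b) (Fin.snoc e 1)) ↔
      HasOnlyRealZeros (lineEvalAdd p e (a - b • e)) := by
  refine ⟨fun hreal z hz => ?_, fun hreal z hz => ?_⟩
  · rcases eq_or_ne z 0 with rfl | hz0
    · exact Complex.zero_im
    · have hroot := (aeval_lineEvalSub_homog_eq_zero_iff hd e a b (z := algebraMap ℝ ℂ b - z⁻¹)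
        (by simpa using hz0)).mpr (by simpa using hz)
      have him : z⁻¹.im = 0 := by simpa [-Complex.inv_im] using hreal _ hroot
      exact complex_inv_im_eq_zero_iff.mp him
  · rcases eq_or_ne (algebraMap ℝ ℂ b - z) 0 with hbz | hbz
    · simp [← sub_eq_zero.mp hbz]
    · have hroot := (aeval_lineEvalSub_homog_eq_zero_iff hd e a b hbz).mp hz
      simpa using complex_inv_im_eq_zero_iff.mp (hreal _ hroot)

end RealZeros

theorem isRZ_iff_homogenization_hyperbolic_general {n : ℕ} (p : MvPolynomial (Fin n) ℝ)
    (d : ℕ) (hd : p.totalDegree ≤ d) (e : Fin n → ℝ) :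
    IsRZ p e ↔ IsHyperbolicWrt (homog p d) (Fin.snoc e 1) := by
  rw [isRZ_iff_forall_hasOnlyRealZeros, IsHyperbolicWrt, eval_snoc_one_homog hd]
  refine and_congr_right fun _ => ⟨fun hreal x => ?_, fun hreal v => ?_⟩
  · rw [← Fin.snoc_init_self x]
    exact (hasOnlyRealZeros_lineEvalSub_homog_iff hd e _ _).mpr (hreal _)
  · simpa using (hasOnlyRealZeros_lineEvalSub_homog_iff hd e v 0).mp (hreal _)

/-- A polynomial `p` of degree `d` is an RZ_e-polynomial iff its
homogenization `P(t,u) = u^d·p(t/u)` is hyperbolic with respect to `(e,1)`. -/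
theorem isRZ_iff_homogenization_hyperbolic {n : ℕ} (p : MvPolynomial (Fin n) ℝ)
    (d : ℕ) (hd : p.totalDegree = d) (e : Fin n → ℝ) :
    IsRZ p e ↔ IsHyperbolicWrt (homog p d) (Fin.snoc e 1) :=
  isRZ_iff_homogenization_hyperbolic_general p d hd.le e
end

section
/- Let P be a homogeneous real polynomial in m variables of degree d ≥ 1 that is hyperbolic with respect to e ∈ ℝ^m \ {0}, and define P^{(1)}(x) = (d/ds) P(x + s·e)|_{s=0} (the directional derivative of P in direction e). Then P^{(1)} is a homogeneous polynomial of degree d−1 that is hyperbolic with respect to e, and the closed hyperbolicity cone of P is contained in the closed hyperbolicity cone of P^{(1)}. -/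
open MvPolynomial

/-- The directional derivative `P⁽¹⁾(x) = (d/ds) P(x + s·e)|_{s=0} = Σᵢ eᵢ·(∂P/∂xᵢ)`. -/
noncomputable def dirDeriv {m : ℕ} (P : MvPolynomial (Fin m) ℝ) (e : Fin m → ℝ) :
    MvPolynomial (Fin m) ℝ :=
  ∑ i, C (e i) * pderiv i P

/-!
Restricted to a line in direction `e`, `P` is a real-rooted polynomial `p` and `P⁽¹⁾` is `p'`,
so `p'` is real-rooted by Rolle's theorem. For the cones, let `A` be the set of points `x` such
that `P > 0` on the ray `x + ℝ≥0 e`. Where `p` is real-rooted with all roots to the left of `t`,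
the logarithmic derivative `p'(t) / p(t) = ∑ 1 / (t - rᵢ)` is positive. Hence `P⁽¹⁾ > 0` on `A`,
and `P` increases along the rays that start in `A`; the latter passes to limits, so that `A` is
relatively closed in `{P > 0}`. By homogeneity `x ∈ A` also says that `P > 0` on the compact
segment from `x` to `e`, so `A` is open. Therefore `A` contains the component of `e` in `{P > 0}`.
-/

section RealRooted

open Polynomial

lemma splits_iff_forall_aeval_eq_zero_im_eq_zero {p : ℝ[X]} (hp : p ≠ 0) :
    p.Splits ↔ ∀ z : ℂ, aeval z p = 0 → z.im = 0 := by
  have mem_range_iff (z : ℂ) : z ∈ (algebraMap ℝ ℂ).range ↔ z.im = 0 :=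
    ⟨by rintro ⟨a, rfl⟩; exact Complex.ofReal_im a, fun hz => ⟨z.re, Complex.ext rfl hz.symm⟩⟩
  refine ⟨fun h z hz => (mem_range_iff z).1 (h.mem_range_of_isRoot hp ?_), fun h => ?_⟩
  · rwa [IsRoot, eval_map_algebraMap]
  · refine Splits.of_splits_map (algebraMap ℝ ℂ) (IsAlgClosed.splits _) fun z hz => ?_
    exact (mem_range_iff z).2 (h z (by simpa using isRoot_of_mem_roots hz))

lemma splits_derivative {p : ℝ[X]} (hp : p.Splits) : (derivative p).Splits := by
  rw [splits_iff_card_roots] at hp ⊢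
  have rolle := card_roots_le_derivative p
  have natDegree_le := natDegree_derivative_le p
  have card_le := card_roots' (derivative p)
  lia

lemma eval_derivative_pos_of_splits {K : Type*} [Field K] [LinearOrder K] [IsStrictOrderedRing K]
    {p : K[X]} (hp : p.Splits) (hdeg : p.natDegree ≠ 0) {t : K}
    (hpos : ∀ s, t ≤ s → 0 < p.eval s) : 0 < (derivative p).eval t := by
  have hroots : ∀ r ∈ p.roots, 0 < 1 / (t - r) := fun r hr => by
    have hrt : r < t := lt_of_not_ge fun htr => (hpos r htr).ne' (isRoot_of_mem_roots hr)
    exact one_div_pos.2 (sub_pos.2 hrt)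
  have hne : p.roots ≠ 0 := by
    rwa [← Multiset.card_pos, ← hp.natDegree_eq_card_roots, Nat.pos_iff_ne_zero]
  rw [hp.eval_derivative_eq_eval_mul_sum (hpos t le_rfl).ne']
  refine mul_pos (hpos t le_rfl) ?_
  simpa using Multiset.sum_lt_sum_of_nonempty (f := fun _ => (0 : K)) hne hroots

end RealRooted

lemma isOpen_setOf_segment_subset {E : Type*} [AddCommGroup E] [Module ℝ E] [TopologicalSpace E]
    [ContinuousAdd E] [ContinuousSMul ℝ E] {U : Set E} (hU : IsOpen U) (e : E) :
    IsOpen {x | segment ℝ x e ⊆ U} := by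
  have hcont : Continuous fun z : E × ℝ => (1 - z.2) • z.1 + z.2 • e := by fun_prop
  simp_rw [segment_eq_image, Set.image_subset_iff]
  refine isOpen_iff_eventually.2 fun x hx => ?_
  exact isCompact_Icc.eventually_forall_of_forall_eventually fun s hs =>
    hcont.continuousAt.eventually_mem (hU.mem_nhds (hx hs))

lemma derivation_aeval {R σ A M : Type*} [CommSemiring R] [Fintype σ] [CommSemiring A]
    [Algebra R A] [AddCommMonoid M] [Module A M] [Module R M]
    (D : Derivation R A M) (f : σ → A) (P : MvPolynomial σ R) :
    D (aeval f P) = ∑ i, aeval f (pderiv i P) • D (f i) := by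
  classical
  induction P using MvPolynomial.induction_on with
  | C a => simp
  | add P Q hP hQ => simp only [map_add, hP, hQ, add_smul, Finset.sum_add_distrib]
  | mul_X P j hP =>
    simp only [map_mul, aeval_X, Derivation.leibniz, hP, pderiv_X, smul_eq_mul, map_add, add_smul,
      Finset.sum_add_distrib, Finset.smul_sum, mul_smul]
    simp [Pi.single_apply, apply_ite (aeval f), ite_smul]

lemma eval_smul_of_isHomogeneous {R σ : Type*} [CommSemiring R] {P : MvPolynomial σ R} {n : ℕ}
    (hP : P.IsHomogeneous n) (c : R) (x : σ → R) : eval (c • x) P = c ^ n * eval x P := by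
  rw [eval_eq, eval_eq, Finset.mul_sum]
  refine Finset.sum_congr rfl fun u hu => ?_
  have hdeg : ∑ i ∈ u.support, u i = n := by
    simpa [Finsupp.weight_apply, Finsupp.sum] using hP (mem_support_iff.1 hu)
  simp only [Pi.smul_apply, smul_eq_mul, mul_pow, Finset.prod_mul_distrib,
    Finset.prod_pow_eq_pow_sum, hdeg]
  ring

/-- The univariate polynomial `t ↦ P(x + t·v)`, the restriction of `P` to the line through `x`
in direction `v`. The sign is opposite to that of `lineEvalSub`, so that no sign appears when it
is differentiated in `t`. -/
noncomputable def lineEval {R σ : Type*} [CommSemiring R] (P : MvPolynomial σ R) (x v : σ → R) :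
    Polynomial R :=
  aeval (fun i => Polynomial.C (x i) + Polynomial.C (v i) * Polynomial.X) P

lemma eval_lineEval {R σ : Type*} [CommSemiring R] (P : MvPolynomial σ R) (x v : σ → R) (t : R) :
    (lineEval P x v).eval t = eval (x + t • v) P := by
  have hline : (fun i => Polynomial.aeval t
      (Polynomial.C (x i) + Polynomial.C (v i) * Polynomial.X)) = x + t • v := by
    ext i
    simp [mul_comm t]
  rw [lineEval, ← Polynomial.coe_aeval_eq_eval, comp_aeval_apply, hline, aeval_eq_eval]

lemma lineEval_neg {R σ : Type*} [CommRing R] (P : MvPolynomial σ R) (x v : σ → R) :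
    lineEval P x (-v) = (lineEval P x v).comp (-Polynomial.X) := by
  rw [Polynomial.comp_eq_aeval, lineEval, lineEval, comp_aeval_apply]
  simp

lemma lineEval_ne_zero {K σ : Type*} [Field K] [Infinite K] {P : MvPolynomial σ K} {n : ℕ}
    (hP : P.IsHomogeneous n) {v : σ → K} (hv : eval v P ≠ 0) (x : σ → K) :
    lineEval P x v ≠ 0 := by
  intro hzero
  have hswap : lineEval P v x * Polynomial.X = 0 := Polynomial.funext fun s => by
    rcases eq_or_ne s 0 with rfl | hs
    · simp
    have hline : v + s • x = s • (x + s⁻¹ • v) := by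
      rw [smul_add, smul_inv_smul₀ hs, add_comm]
    rw [Polynomial.eval_mul, eval_lineEval, hline, eval_smul_of_isHomogeneous hP,
      ← eval_lineEval, hzero]
    simp
  have hvanish := (mul_eq_zero.1 hswap).resolve_right Polynomial.X_ne_zero
  exact hv (by simpa [hvanish] using (eval_lineEval P v x 0).symm)

section DirDeriv

variable {m d : ℕ} {P : MvPolynomial (Fin m) ℝ} {e : Fin m → ℝ}

lemma isHomogeneous_dirDeriv (hP : P.IsHomogeneous d) (e : Fin m → ℝ) :
    (dirDeriv P e).IsHomogeneous (d - 1) :=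
  IsHomogeneous.sum _ _ _ fun i _ => hP.pderiv.C_mul (e i)

lemma eval_dirDeriv_self (hP : P.IsHomogeneous d) (e : Fin m → ℝ) :
    eval e (dirDeriv P e) = d * eval e P := by
  simpa [dirDeriv] using congrArg (eval e) hP.sum_X_mul_pderiv

lemma eval_dirDeriv_self_pos (hP : P.IsHomogeneous d) (hd : 1 ≤ d) (he : 0 < eval e P) :
    0 < eval e (dirDeriv P e) := by
  rw [eval_dirDeriv_self hP]
  positivity

lemma derivative_lineEval (P : MvPolynomial (Fin m) ℝ) (x e : Fin m → ℝ) :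
    Polynomial.derivative (lineEval P x e) = lineEval (dirDeriv P e) x e := by
  have hchain := derivation_aeval (Polynomial.derivative' (R := ℝ))
    (fun i => Polynomial.C (x i) + Polynomial.C (e i) * Polynomial.X) P
  rw [lineEval, lineEval, dirDeriv, map_sum]
  refine hchain.trans (Finset.sum_congr rfl fun i _ => ?_)
  simpa using mul_comm _ _

lemma lineEvalSub_eq_lineEval_comp_neg_X (P : MvPolynomial (Fin m) ℝ) (x e : Fin m → ℝ) :
    lineEvalSub P x e = (lineEval P x e).comp (-Polynomial.X) := by
  rw [← lineEval_neg]
  simp [lineEval, lineEvalSub, sub_eq_add_neg]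

lemma isHyperbolicWrt_iff_splits (hP : P.IsHomogeneous d) :
    IsHyperbolicWrt P e ↔ 0 < eval e P ∧ ∀ x, (lineEval P x e).Splits := by
  refine and_congr_right fun hpos => forall_congr' fun x => ?_
  have hne := Polynomial.comp_neg_X_eq_zero_iff.not.2 (lineEval_ne_zero hP hpos.ne' x)
  rw [lineEvalSub_eq_lineEval_comp_neg_X, ← splits_iff_forall_aeval_eq_zero_im_eq_zero hne]
  refine ⟨fun h => ?_, fun h => h.comp_neg_X⟩
  simpa only [Polynomial.comp_neg_X_comp_neg_X] using h.comp_neg_X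

protected lemma IsHyperbolicWrt.dirDeriv (h : IsHyperbolicWrt P e) (hP : P.IsHomogeneous d)
    (hd : 1 ≤ d) : IsHyperbolicWrt (dirDeriv P e) e := by
  refine (isHyperbolicWrt_iff_splits (isHomogeneous_dirDeriv hP e)).2
    ⟨eval_dirDeriv_self_pos hP hd h.1, fun x => ?_⟩
  rw [← derivative_lineEval]
  exact splits_derivative (((isHyperbolicWrt_iff_splits hP).1 h).2 x)

end DirDeriv

section RayCone

variable {σ : Type*} {n : ℕ} {P : MvPolynomial σ ℝ} {e x : σ → ℝ}

/-- The set of points from which the ray in direction `e` stays inside `{P > 0}`. For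
homogeneous `P` hyperbolic with respect to `e` it serves as a description of the hyperbolicity
cone that only involves the restrictions of `P` to lines in direction `e`. -/
def rayCone (P : MvPolynomial σ ℝ) (e : σ → ℝ) : Set (σ → ℝ) :=
  {x | ∀ t : ℝ, 0 ≤ t → 0 < eval (x + t • e) P}

lemma add_smul_mem_rayCone (hx : x ∈ rayCone P e) {t : ℝ} (ht : 0 ≤ t) :
    x + t • e ∈ rayCone P e := fun s hs => by
  simpa only [add_assoc, add_smul] using hx (t + s) (add_nonneg ht hs)

lemma mem_rayCone_iff_segment_subset (hP : P.IsHomogeneous n) (he : 0 < eval e P) :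
    x ∈ rayCone P e ↔ segment ℝ x e ⊆ {y | 0 < eval y P} := by
  constructor
  · rintro hx _ ⟨a, b, ha, hb, hab, rfl⟩
    rcases ha.eq_or_lt with rfl | ha
    · obtain rfl : b = 1 := by simpa using hab
      simpa using he
    have hscale : a • x + b • e = a • (x + (b / a) • e) := by
      rw [smul_add, smul_smul, mul_div_cancel₀ _ ha.ne']
    rw [Set.mem_ofPred_eq, hscale, eval_smul_of_isHomogeneous hP]
    exact mul_pos (pow_pos ha n) (hx _ (by positivity))
  · intro hx t ht
    have hscale : x + t • e = (1 + t) • ((1 / (1 + t)) • x + (t / (1 + t)) • e) := by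
      rw [smul_add, smul_smul, smul_smul, mul_div_cancel₀ _ (by positivity),
        mul_div_cancel₀ _ (by positivity), one_smul]
    have hmem : (1 / (1 + t)) • x + (t / (1 + t)) • e ∈ segment ℝ x e :=
      ⟨_, _, by positivity, by positivity, by field_simp, rfl⟩
    rw [hscale, eval_smul_of_isHomogeneous hP]
    exact mul_pos (by positivity) (hx hmem)

lemma self_mem_rayCone (hP : P.IsHomogeneous n) (he : 0 < eval e P) : e ∈ rayCone P e :=
  (mem_rayCone_iff_segment_subset hP he).2 (by simpa using he)

lemma isOpen_rayCone (hP : P.IsHomogeneous n) (he : 0 < eval e P) : IsOpen (rayCone P e) := by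
  have heq : rayCone P e = {x | segment ℝ x e ⊆ {y | 0 < eval y P}} :=
    Set.ext fun _ => mem_rayCone_iff_segment_subset hP he
  rw [heq]
  exact isOpen_setOf_segment_subset (isOpen_lt continuous_const (continuous_eval P)) e

end RayCone

namespace IsHyperbolicWrt

variable {m d : ℕ} {P : MvPolynomial (Fin m) ℝ} {e x : Fin m → ℝ}

lemma eval_dirDeriv_pos_of_mem_rayCone (h : IsHyperbolicWrt P e) (hP : P.IsHomogeneous d)
    (hd : 1 ≤ d) (hx : x ∈ rayCone P e) : 0 < eval x (dirDeriv P e) := by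
  have hderiv : Polynomial.derivative (lineEval P x e) ≠ 0 := by
    rw [derivative_lineEval]
    exact lineEval_ne_zero (isHomogeneous_dirDeriv hP e) (h.dirDeriv hP hd).1.ne' x
  have hdeg : (lineEval P x e).natDegree ≠ 0 :=
    fun h0 => hderiv (Polynomial.derivative_of_natDegree_zero h0)
  have hpos := eval_derivative_pos_of_splits (((isHyperbolicWrt_iff_splits hP).1 h).2 x) hdeg
    (t := 0) fun t ht => by rw [eval_lineEval]; exact hx t ht
  simpa [derivative_lineEval, eval_lineEval] using hpos

lemma eval_le_eval_add_smul (h : IsHyperbolicWrt P e) (hP : P.IsHomogeneous d) (hd : 1 ≤ d)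
    (hx : x ∈ rayCone P e) {t : ℝ} (ht : 0 ≤ t) : eval x P ≤ eval (x + t • e) P := by
  have hmono : MonotoneOn (lineEval P x e).eval (Set.Ici 0) :=
    monotoneOn_of_deriv_nonneg (convex_Ici 0) (Polynomial.continuous _).continuousOn
      (Polynomial.differentiable _).differentiableOn fun s hs => by
        rw [Polynomial.deriv, derivative_lineEval, eval_lineEval]
        exact (h.eval_dirDeriv_pos_of_mem_rayCone hP hd
          (add_smul_mem_rayCone hx (interior_subset hs))).le
  simpa [eval_lineEval] using hmono Set.self_mem_Ici ht ht

lemma closure_rayCone_inter_subset (h : IsHyperbolicWrt P e) (hP : P.IsHomogeneous d)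
    (hd : 1 ≤ d) : closure (rayCone P e) ∩ {x | 0 < eval x P} ⊆ rayCone P e := by
  rintro x ⟨hx, hxpos⟩ t ht
  have hcont : Continuous fun y => eval (y + t • e) P :=
    (continuous_eval P).comp (continuous_id.add continuous_const)
  have hle : eval x P ≤ eval (x + t • e) P :=
    closure_minimal (fun _ hy => h.eval_le_eval_add_smul hP hd hy ht)
      (isClosed_le (continuous_eval P) hcont) hx
  exact lt_of_lt_of_le hxpos hle

lemma connectedComponentIn_subset_rayCone (h : IsHyperbolicWrt P e) (hP : P.IsHomogeneous d)
    (hd : 1 ≤ d) : connectedComponentIn {x | 0 < eval x P} e ⊆ rayCone P e :=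
  isPreconnected_connectedComponentIn.subset_of_closure_inter_subset (isOpen_rayCone hP h.1)
    ⟨e, mem_connectedComponentIn h.1, self_mem_rayCone hP h.1⟩
    ((Set.inter_subset_inter_right _ (connectedComponentIn_subset _ _)).trans
      (h.closure_rayCone_inter_subset hP hd))

end IsHyperbolicWrt

/-- If `P` is homogeneous of degree `d ≥ 1` and hyperbolic with respect
to `e ≠ 0`, then `P⁽¹⁾` is homogeneous of degree `d - 1`, hyperbolic with respect to `e`,
and the closed hyperbolicity cone of `P` is contained in that of `P⁽¹⁾`. -/
theorem dirDeriv_hyperbolic {m d : ℕ} (P : MvPolynomial (Fin m) ℝ)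
    (hd : 1 ≤ d) (hhom : P.IsHomogeneous d) (e : Fin m → ℝ) (he : e ≠ 0)
    (hhyp : IsHyperbolicWrt P e) :
    (dirDeriv P e).IsHomogeneous (d - 1) ∧ IsHyperbolicWrt (dirDeriv P e) e ∧
      closure (connectedComponentIn {x | 0 < eval x P} e)
        ⊆ closure (connectedComponentIn {x | 0 < eval x (dirDeriv P e)} e) := by
  refine ⟨isHomogeneous_dirDeriv hhom e, hhyp.dirDeriv hhom hd, closure_mono ?_⟩
  have hpos : connectedComponentIn {x | 0 < eval x P} e ⊆ {x | 0 < eval x (dirDeriv P e)} :=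
    fun _ hx => hhyp.eval_dirDeriv_pos_of_mem_rayCone hhom hd
      (hhyp.connectedComponentIn_subset_rayCone hhom hd hx)
  exact isPreconnected_connectedComponentIn.subset_connectedComponentIn
    (mem_connectedComponentIn hhyp.1) hpos
end

section
/- Let p ∈ ℝ[t_1,…,t_n] be an RZ_0-polynomial of degree d with homogeneous decomposition p = Σ_{i=0}^d p_i, and for k ≥ 0 define p^{(k)}(t) = Σ_{i=k}^d (i!/(i−k)!)·p_{d−i}(t). Then the rigidly convex set S defined by p (the closure of the connected component of {p > 0} containing 0) is the basic closed set S = S(p, p^{(1)}, …, p^{(d−1)}) = {x ∈ ℝ^n | p(x) ≥ 0, p^{(1)}(x) ≥ 0, …, p^{(d−1)}(x) ≥ 0}. -/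
open MvPolynomial

/-- The Renegar derivative `p⁽ᵏ⁾ = Σ_{i=k}^d (i!/(i-k)!)·p_{d-i}` of a polynomial `p` of
degree `d` with homogeneous components `p_j`. -/
noncomputable def renegarDeriv {n : ℕ} (p : MvPolynomial (Fin n) ℝ) (d k : ℕ) :
    MvPolynomial (Fin n) ℝ :=
  ∑ i ∈ Finset.Icc k d, C ((i.descFactorial k : ℕ) : ℝ) * homogeneousComponent (d - i) p

/-!
For fixed `x`, the polynomial `f(s) = s ^ d * p(x / s)` is real-rooted with leading coefficient
`p(0) > 0`, and `p⁽ᵏ⁾(x)` is its `k`-th derivative at `1`. If all roots of `f` are less than `1`,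
all these derivatives are positive by Vieta; conversely, if they are nonnegative, Taylor expansion
at `1` shows that `f` has no root greater than `1`. As the roots `s ≠ 0` of `f` correspond to the
zeros `x / s` of `p`, a point where all `p⁽ᵏ⁾` are nonnegative is joined to `0` by an open segment
on which all `p⁽ᵏ⁾` are positive. So the positivity set is open, star-shaped about `0` and
relatively closed in `{p > 0}`; it is therefore the component of `0`, and its closure is the
nonnegativity set.
-/

section Univariate

open Polynomial

theorem esymm_pos {R : Type*} [CommSemiring R] [PartialOrder R] [IsStrictOrderedRing R]
    {s : Multiset R} (hs : ∀ a ∈ s, 0 < a) {k : ℕ} (hk : k ≤ s.card) : 0 < s.esymm k := by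
  have prod_pos : ∀ t ∈ s.powersetCard k, 0 < t.prod := fun t ht =>
    Multiset.prod_induction (0 < ·) t (fun _ _ => mul_pos) one_pos fun a ha =>
      hs a (Multiset.mem_of_le (Multiset.mem_powersetCard.1 ht).1 ha)
  have powersetCard_ne_zero : s.powersetCard k ≠ 0 := by
    rw [← Multiset.card_pos, Multiset.card_powersetCard]
    exact Nat.choose_pos hk
  refine Multiset.sum_induction_nonempty (0 < ·) (fun _ _ => add_pos) ?_ ?_
  · simpa using powersetCard_ne_zero
  · rwa [Multiset.forall_mem_map_iff]

theorem eval_one_reflect {R : Type*} [CommSemiring R] {f : R[X]} {N : ℕ} (hf : f.natDegree ≤ N) :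
    (f.reflect N).eval 1 = f.eval 1 := by
  have := invertibleOne (α := R)
  simpa using eval₂_reflect_mul_pow (RingHom.id R) 1 N f hf

theorem eval_iterate_derivative_eq_factorial_mul_taylor_coeff {R : Type*} [CommSemiring R]
    (f : R[X]) (a : R) (k : ℕ) :
    (derivative^[k] f).eval a = k.factorial * (taylor a f).coeff k := by
  rw [taylor_coeff, ← factorial_smul_hasseDeriv]
  simp

section Field

variable {K : Type*} [Field K]

theorem isRoot_reflect_iff {f : K[X]} {N : ℕ} (hf : f.natDegree ≤ N) {s : K} (hs : s ≠ 0) :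
    (f.reflect N).IsRoot s ↔ f.IsRoot s⁻¹ := by
  have := invertibleOfNonzero (inv_ne_zero hs)
  simpa only [invOf_eq_inv, inv_inv, Polynomial.eval₂_id, IsRoot.def] using
    eval₂_reflect_eq_zero_iff (RingHom.id K) s⁻¹ N f hf

theorem splits_reflect {f : K[X]} (hf : f.Splits) {N : ℕ} (hN : f.natDegree ≤ N) :
    (f.reflect N).Splits := by
  refine Splits.of_splits_map (algebraMap K (AlgebraicClosure K)) (IsAlgClosed.splits _)
    fun z hz => ?_
  rcases eq_or_ne z 0 with rfl | hz0
  · exact zero_mem _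
  have hf0 : f ≠ 0 := by
    rintro rfl
    simp at hz
  have hroot : (f.map (algebraMap K (AlgebraicClosure K))).IsRoot z⁻¹ := by
    rw [← isRoot_reflect_iff (natDegree_map_le.trans hN) hz0, reflect_map]
    exact isRoot_of_mem_roots hz
  obtain ⟨a, ha⟩ := hf.mem_range_of_isRoot hf0 hroot
  exact ⟨a⁻¹, by rw [map_inv₀, ha, inv_inv]⟩

variable [LinearOrder K] [IsStrictOrderedRing K] {f : K[X]}

theorem coeff_pos_of_splits_of_roots_neg (hf : f.Splits) (hlead : 0 < f.leadingCoeff)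
    (hroots : ∀ r ∈ f.roots, r < 0) {k : ℕ} (hk : k ≤ f.natDegree) : 0 < f.coeff k := by
  rw [coeff_eq_esymm_roots_of_splits hf hk, mul_assoc, ← Multiset.esymm_neg]
  refine mul_pos hlead (esymm_pos ?_ ?_)
  · rw [Multiset.forall_mem_map_iff]
    exact fun r hr => neg_pos.2 (hroots r hr)
  · rw [Multiset.card_map, ← hf.natDegree_eq_card_roots]
    exact Nat.sub_le _ _

theorem eval_iterate_derivative_pos_of_splits (hf : f.Splits) (hlead : 0 < f.leadingCoeff) {a : K}
    (hroots : ∀ r, f.IsRoot r → r < a) {k : ℕ} (hk : k ≤ f.natDegree) :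
    0 < (derivative^[k] f).eval a := by
  rw [eval_iterate_derivative_eq_factorial_mul_taylor_coeff]
  refine mul_pos (by positivity) (coeff_pos_of_splits_of_roots_neg (hf.taylor a) ?_ ?_ ?_)
  · rwa [leadingCoeff_taylor]
  · intro r hr
    have := isRoot_of_mem_roots hr
    rw [IsRoot, taylor_eval] at this
    simpa using hroots _ this
  · rwa [natDegree_taylor]

theorem eval_pos_of_eval_iterate_derivative_nonneg (hlead : 0 < f.leadingCoeff) {a : K}
    (hderiv : ∀ k < f.natDegree, 0 ≤ (derivative^[k] f).eval a) {s : K} (hs : a < s) :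
    0 < f.eval s := by
  have hsa : 0 < s - a := sub_pos.2 hs
  have hcoeff : ∀ k < f.natDegree, 0 ≤ (taylor a f).coeff k := fun k hk => by
    have := hderiv k hk
    rw [eval_iterate_derivative_eq_factorial_mul_taylor_coeff] at this
    exact nonneg_of_mul_nonneg_right this (by positivity)
  rw [← taylor_eval_sub a, eval_eq_sum_range, natDegree_taylor, Finset.sum_range_succ,
    coeff_taylor_natDegree]
  refine add_pos_of_nonneg_of_pos (Finset.sum_nonneg fun k hk => ?_)
    (mul_pos hlead (pow_pos hsa _))
  exact mul_nonneg (hcoeff k (Finset.mem_range.1 hk)) (pow_nonneg hsa.le k)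

end Field

end Univariate

theorem coeff_aeval_C_mul_X {σ R : Type*} [CommSemiring R] (p : MvPolynomial σ R) (x : σ → R)
    (j : ℕ) : (aeval (fun i => Polynomial.C (x i) * Polynomial.X) p).coeff j =
      eval x (homogeneousComponent j p) := by
  induction p using MvPolynomial.induction_on' with
  | add p q hp hq => simp only [map_add, Polynomial.coeff_add, hp, hq]
  | monomial m a =>
    have haeval : aeval (fun i => Polynomial.C (x i) * Polynomial.X) (monomial m a) =
        Polynomial.monomial m.degree (eval x (monomial m a)) := by
      simp only [aeval_monomial, eval_monomial, Finsupp.prod, mul_pow, Finset.prod_mul_distrib,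
        Finset.prod_pow_eq_pow_sum, Finsupp.degree_apply, ← Polynomial.C_mul_X_pow_eq_monomial,
        Polynomial.algebraMap_eq, map_mul, map_prod, map_pow, mul_assoc]
    rw [haeval, Polynomial.coeff_monomial,
      homogeneousComponent_of_mem (isHomogeneous_monomial a rfl), apply_ite (eval x), map_zero]
    simp only [eq_comm]

theorem closure_connectedComponentIn_eq {E : Type*} [AddCommGroup E] [Module ℝ E]
    [TopologicalSpace E] [ContinuousAdd E] [ContinuousSMul ℝ E] {e : E} {C U W : Set E}
    (hC : IsClosed C) (hU : IsOpen U) (hCW : C ∩ W = U) (he : e ∈ U)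
    (hseg : ∀ x ∈ C, openSegment ℝ e x ⊆ U) : closure (connectedComponentIn W e) = C := by
  have hUC : U ⊆ C := hCW ▸ Set.inter_subset_left
  have hUW : U ⊆ W := hCW ▸ Set.inter_subset_right
  have hstar : StarConvex ℝ e U :=
    (starConvex_iff_openSegment_subset he).2 fun x hx => hseg x (hUC hx)
  have hcomp : connectedComponentIn W e = U := by
    refine Set.Subset.antisymm ?_ ?_
    · refine isPreconnected_connectedComponentIn.subset_of_closure_inter_subset hU
        ⟨e, mem_connectedComponentIn (hUW he), he⟩ ?_
      rw [← hCW]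
      exact Set.inter_subset_inter (closure_minimal Set.inter_subset_left hC)
        (connectedComponentIn_subset W e)
    · exact (hstar.isPathConnected he).isConnected.isPreconnected.subset_connectedComponentIn he hUW
  rw [hcomp]
  refine (closure_minimal hUC hC).antisymm fun x hx => ?_
  exact closure_mono (hseg x hx) (segment_subset_closure_openSegment (right_mem_segment ℝ e x))

section RealZero

variable {n : ℕ}

theorem eval_lineEvalAdd (p : MvPolynomial (Fin n) ℝ) (e v : Fin n → ℝ) (s : ℝ) :
    (lineEvalAdd p e v).eval s = eval (e + s • v) p := by
  rw [lineEvalAdd, ← Polynomial.coe_aeval_eq_eval, ← AlgHom.comp_apply, comp_aeval, aeval_eq_eval]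
  congr 2
  ext i
  simp only [map_add, map_mul, Polynomial.aeval_C, Polynomial.aeval_X, Pi.add_apply,
    Algebra.algebraMap_self_apply, Pi.smul_apply, smul_eq_mul, mul_comm s]

theorem natDegree_lineEvalAdd_le (p : MvPolynomial (Fin n) ℝ) (e v : Fin n → ℝ) :
    (lineEvalAdd p e v).natDegree ≤ p.totalDegree := by
  have hle : (lineEvalAdd p e v).natDegree ≤ p.totalDegree * 1 :=
    aeval_natDegree_le p le_rfl _ fun i => by compute_degree
  rwa [mul_one] at hle

theorem coeff_lineEvalAdd_zero (p : MvPolynomial (Fin n) ℝ) (x : Fin n → ℝ) (j : ℕ) :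
    (lineEvalAdd p 0 x).coeff j = eval x (homogeneousComponent j p) := by
  simp only [lineEvalAdd, Pi.zero_apply, map_zero, zero_add, coeff_aeval_C_mul_X]

theorem IsRZ.splits_lineEvalAdd {p : MvPolynomial (Fin n) ℝ} {e : Fin n → ℝ} (hRZ : IsRZ p e)
    (v : Fin n → ℝ) : (lineEvalAdd p e v).Splits := by
  rcases eq_or_ne v 0 with rfl | hv
  · have hconst : lineEvalAdd p e 0 = Polynomial.C (eval e p) := by
      simpa [lineEvalAdd, Function.comp_def] using aeval_algebraMap_apply (Polynomial ℝ) e p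
    rw [hconst]
    exact Polynomial.Splits.C _
  refine Polynomial.Splits.of_splits_map (algebraMap ℝ ℂ) (IsAlgClosed.splits _) fun z hz => ?_
  have hz_im : z.im = 0 := hRZ.2 v hv z (by
    rw [← Polynomial.eval_map_algebraMap]
    exact Polynomial.isRoot_of_mem_roots hz)
  exact ⟨z.re, Complex.ext rfl hz_im.symm⟩

/-- The restriction `s ↦ s ^ d * p (x / s)` of the degree-`d` homogenization of `p` to the line
through `(0, x)` in the direction of the homogenizing variable: the Renegar derivatives of `p` at
`x` are its derivatives at `1`. The formula is the intended one only for `p.totalDegree ≤ d`. -/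
noncomputable def homogenizedLine (p : MvPolynomial (Fin n) ℝ) (d : ℕ) (x : Fin n → ℝ) :
    Polynomial ℝ :=
  (lineEvalAdd p 0 x).reflect d

variable {p : MvPolynomial (Fin n) ℝ} {d : ℕ}

theorem coeff_homogenizedLine (p : MvPolynomial (Fin n) ℝ) (x : Fin n → ℝ) {i : ℕ} (hi : i ≤ d) :
    (homogenizedLine p d x).coeff i = eval x (homogeneousComponent (d - i) p) := by
  rw [homogenizedLine, Polynomial.coeff_reflect, Polynomial.revAt_le hi, coeff_lineEvalAdd_zero]

theorem coeff_homogenizedLine_self (p : MvPolynomial (Fin n) ℝ) (d : ℕ) (x : Fin n → ℝ) :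
    (homogenizedLine p d x).coeff d = eval 0 p := by
  simp [coeff_homogenizedLine p x le_rfl, homogeneousComponent_zero, constantCoeff_eq]

theorem natDegree_homogenizedLine_le (hd : p.totalDegree ≤ d) (x : Fin n → ℝ) :
    (homogenizedLine p d x).natDegree ≤ d :=
  Polynomial.natDegree_reflect_le.trans (max_le le_rfl ((natDegree_lineEvalAdd_le p 0 x).trans hd))

theorem natDegree_homogenizedLine (hd : p.totalDegree ≤ d) (hp : eval 0 p ≠ 0) (x : Fin n → ℝ) :
    (homogenizedLine p d x).natDegree = d :=
  Polynomial.natDegree_eq_of_le_of_coeff_ne_zero (natDegree_homogenizedLine_le hd x)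
    (by rwa [coeff_homogenizedLine_self])

theorem leadingCoeff_homogenizedLine (hd : p.totalDegree ≤ d) (hp : eval 0 p ≠ 0)
    (x : Fin n → ℝ) : (homogenizedLine p d x).leadingCoeff = eval 0 p := by
  rw [Polynomial.leadingCoeff, natDegree_homogenizedLine hd hp, coeff_homogenizedLine_self]

theorem isRoot_homogenizedLine_iff (hd : p.totalDegree ≤ d) (x : Fin n → ℝ) {s : ℝ} (hs : s ≠ 0) :
    (homogenizedLine p d x).IsRoot s ↔ eval (s⁻¹ • x) p = 0 := by
  rw [homogenizedLine, isRoot_reflect_iff ((natDegree_lineEvalAdd_le p 0 x).trans hd) hs,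
    Polynomial.IsRoot.def, eval_lineEvalAdd, zero_add]

theorem IsRZ.splits_homogenizedLine (hRZ : IsRZ p 0) (hd : p.totalDegree ≤ d) (x : Fin n → ℝ) :
    (homogenizedLine p d x).Splits :=
  splits_reflect (hRZ.splits_lineEvalAdd x) ((natDegree_lineEvalAdd_le p 0 x).trans hd)

theorem eval_renegarDeriv (hd : p.totalDegree ≤ d) (x : Fin n → ℝ) (k : ℕ) :
    eval x (renegarDeriv p d k) =
      (Polynomial.derivative^[k] (homogenizedLine p d x)).eval 1 := by
  have hsubset : Finset.Icc k d ⊆ Finset.range (d + 1) := fun i hi =>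
    Finset.mem_range_succ_iff.2 (Finset.mem_Icc.1 hi).2
  have hlow : ∀ i ∈ Finset.range (d + 1), i ∉ Finset.Icc k d → i.descFactorial k = 0 := by
    intro i hi hik
    rw [Nat.descFactorial_eq_zero_iff_lt]
    grind
  rw [(homogenizedLine p d x).as_sum_range_C_mul_X_pow'
    (Nat.lt_succ_of_le (natDegree_homogenizedLine_le hd x)),
    Polynomial.iterate_derivative_sum, Polynomial.eval_finsetSum, renegarDeriv, map_sum]
  calc
    ∑ i ∈ Finset.Icc k d, eval x (C ((i.descFactorial k : ℕ) : ℝ) * homogeneousComponent (d - i) p)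
      = ∑ i ∈ Finset.range (d + 1), i.descFactorial k * (homogenizedLine p d x).coeff i := by
        refine Finset.sum_subset_zero_on_sdiff hsubset ?_ ?_
        · intro i hi
          rw [Finset.mem_sdiff] at hi
          simp [hlow i hi.1 hi.2]
        · intro i hi
          simp [coeff_homogenizedLine p x (Finset.mem_Icc.1 hi).2]
    _ = _ := Finset.sum_congr rfl fun i _ => by
        simp only [Polynomial.iterate_derivative_C_mul, Polynomial.eval_mul, Polynomial.eval_C,
          Polynomial.iterate_derivative_X_pow_eq_C_mul, Polynomial.eval_pow, Polynomial.eval_X,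
          one_pow, mul_one]
        exact mul_comm _ _

theorem eval_renegarDeriv_zero (hd : p.totalDegree ≤ d) (x : Fin n → ℝ) :
    eval x (renegarDeriv p d 0) = eval x p := by
  rw [eval_renegarDeriv hd, Function.iterate_zero_apply, homogenizedLine,
    eval_one_reflect ((natDegree_lineEvalAdd_le p 0 x).trans hd), eval_lineEvalAdd, zero_add,
    one_smul]

/-- The points at which the Renegar derivatives of orders `k < d` are nonnegative; for
`d = p.totalDegree` this is the paper's basic closed set `S(p, p⁽¹⁾, …, p⁽ᵈ⁻¹⁾)`. -/
def renegarNonnegSet (p : MvPolynomial (Fin n) ℝ) (d : ℕ) : Set (Fin n → ℝ) :=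
  {x | ∀ k < d, 0 ≤ eval x (renegarDeriv p d k)}

/-- The points at which the Renegar derivatives of all orders `k ≤ d` are positive; for an
RZ₀-polynomial of degree at most `d` this is the connected component of `0` in `{p > 0}`. -/
def renegarPosSet (p : MvPolynomial (Fin n) ℝ) (d : ℕ) : Set (Fin n → ℝ) :=
  {x | ∀ k ≤ d, 0 < eval x (renegarDeriv p d k)}

theorem isClosed_renegarNonnegSet (p : MvPolynomial (Fin n) ℝ) (d : ℕ) :
    IsClosed (renegarNonnegSet p d) := by
  simp only [renegarNonnegSet, Set.ofPred_forall]
  exact isClosed_biInter fun k _ => isClosed_le continuous_const (continuous_eval _)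

theorem isOpen_renegarPosSet (p : MvPolynomial (Fin n) ℝ) (d : ℕ) :
    IsOpen (renegarPosSet p d) := by
  simp only [renegarPosSet, Set.ofPred_forall]
  exact (Set.finite_Iic d).isOpen_biInter fun k _ => isOpen_lt continuous_const (continuous_eval _)

theorem eval_smul_ne_zero_of_mem_renegarNonnegSet (hd : p.totalDegree ≤ d) (hp : 0 < eval 0 p)
    {x : Fin n → ℝ} (hx : x ∈ renegarNonnegSet p d) {t : ℝ} (ht₀ : 0 ≤ t) (ht₁ : t < 1) :
    eval (t • x) p ≠ 0 := by
  rcases ht₀.eq_or_lt with rfl | ht₀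
  · simpa using hp.ne'
  have hroot : ¬ (homogenizedLine p d x).IsRoot t⁻¹ := by
    refine (eval_pos_of_eval_iterate_derivative_nonneg ?_ ?_ ((one_lt_inv₀ ht₀).2 ht₁)).ne'
    · rwa [leadingCoeff_homogenizedLine hd hp.ne']
    · intro k hk
      rw [natDegree_homogenizedLine hd hp.ne'] at hk
      rw [← eval_renegarDeriv hd]
      exact hx k hk
  rwa [isRoot_homogenizedLine_iff hd x (inv_ne_zero ht₀.ne'), inv_inv] at hroot

theorem IsRZ.mem_renegarPosSet (hRZ : IsRZ p 0) (hd : p.totalDegree ≤ d) {x : Fin n → ℝ}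
    (hx : ∀ t : ℝ, 0 ≤ t → t ≤ 1 → eval (t • x) p ≠ 0) : x ∈ renegarPosSet p d := by
  intro k hk
  rw [eval_renegarDeriv hd]
  refine eval_iterate_derivative_pos_of_splits (hRZ.splits_homogenizedLine hd x) ?_ ?_ ?_
  · rw [leadingCoeff_homogenizedLine hd hRZ.1.ne']
    exact hRZ.1
  · intro s hs
    by_contra! hs₁
    have hs₀ : 0 < s := one_pos.trans_le hs₁
    rw [isRoot_homogenizedLine_iff hd x hs₀.ne'] at hs
    exact hx s⁻¹ (inv_nonneg.2 hs₀.le) (inv_le_one_of_one_le₀ hs₁) hs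
  · rwa [natDegree_homogenizedLine hd hRZ.1.ne']

theorem IsRZ.openSegment_subset_renegarPosSet (hRZ : IsRZ p 0) (hd : p.totalDegree ≤ d)
    {x : Fin n → ℝ} (hx : x ∈ renegarNonnegSet p d) :
    openSegment ℝ 0 x ⊆ renegarPosSet p d := by
  rintro _ ⟨s, t, hs, ht, hst, rfl⟩
  rw [smul_zero, zero_add]
  refine hRZ.mem_renegarPosSet hd fun u hu₀ hu₁ => ?_
  rw [smul_smul]
  exact eval_smul_ne_zero_of_mem_renegarNonnegSet hd hRZ.1 hx (by positivity) (by nlinarith)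

theorem IsRZ.renegarNonnegSet_inter_eq (hRZ : IsRZ p 0) (hd : p.totalDegree ≤ d) :
    renegarNonnegSet p d ∩ {x | 0 < eval x p} = renegarPosSet p d := by
  ext x
  constructor
  · rintro ⟨hx, hpx⟩
    refine hRZ.mem_renegarPosSet hd fun t ht₀ ht₁ => ?_
    rcases ht₁.eq_or_lt with rfl | ht₁
    · rw [one_smul]
      exact hpx.ne'
    · exact eval_smul_ne_zero_of_mem_renegarNonnegSet hd hRZ.1 hx ht₀ ht₁
  · intro hx
    refine ⟨fun k hk => (hx k hk.le).le, ?_⟩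
    rw [Set.mem_ofPred_eq, ← eval_renegarDeriv_zero hd]
    exact hx 0 d.zero_le

theorem rigidlyConvexSet_eq_basicClosed_general (hd : p.totalDegree ≤ d) (hRZ : IsRZ p 0) :
    closure (connectedComponentIn {x | 0 < eval x p} 0)
      = {x : Fin n → ℝ | ∀ k < d, 0 ≤ eval x (renegarDeriv p d k)} := by
  have hzero : 0 ∈ renegarPosSet p d :=
    hRZ.mem_renegarPosSet hd fun t _ _ => by simpa only [smul_zero] using hRZ.1.ne'
  exact closure_connectedComponentIn_eq (isClosed_renegarNonnegSet p d) (isOpen_renegarPosSet p d)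
    (hRZ.renegarNonnegSet_inter_eq hd) hzero
    fun x hx => hRZ.openSegment_subset_renegarPosSet hd hx

end RealZero

/-- If `p` is an RZ₀-polynomial of degree `d`, then the rigidly convex
set defined by `p` is the basic closed set
`S(p, p⁽¹⁾, …, p⁽ᵈ⁻¹⁾) = {x | p⁽ᵏ⁾(x) ≥ 0 for all k = 0,…,d-1}` (where `p⁽⁰⁾ = p`). -/
theorem rigidlyConvexSet_eq_basicClosed {n : ℕ} (p : MvPolynomial (Fin n) ℝ)
    (d : ℕ) (hd : p.totalDegree = d) (hRZ : IsRZ p 0) :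
    closure (connectedComponentIn {x | 0 < eval x p} 0)
      = {x : Fin n → ℝ | ∀ k < d, 0 ≤ eval x (renegarDeriv p d k)} := by
  exact rigidlyConvexSet_eq_basicClosed_general hd.le hRZ
end

section
/- Let S ⊆ ℝ² be the basic closed set S = S(t_2 − t_1³, t_1 + 1, t_2, 1 − t_2) = {(x,y) ∈ ℝ² | y ≥ x³, x ≥ −1, 0 ≤ y ≤ 1}. Then the singleton {(0,0)} is a face of S that is not exposed. -/
open MvPolynomial

/-- A face of a convex set `S ⊆ ℝⁿ`: a nonempty convex subset `F ⊆ S` such that whenever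
`x, y ∈ S`, `λ ∈ (0,1)` and `λx + (1-λ)y ∈ F`, then `x, y ∈ F`. -/
def IsFaceOf {n : ℕ} (S F : Set (Fin n → ℝ)) : Prop :=
  F.Nonempty ∧ Convex ℝ F ∧ F ⊆ S ∧
    ∀ x ∈ S, ∀ y ∈ S, ∀ l : ℝ, 0 < l → l < 1 →
      l • x + (1 - l) • y ∈ F → x ∈ F ∧ y ∈ F

/-- The affine-linear function `x ↦ c + a·x` on `ℝⁿ`. -/
def affEval {n : ℕ} (a : Fin n → ℝ) (c : ℝ) (x : Fin n → ℝ) : ℝ :=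
  c + ∑ i, a i * x i

/-- `F` is an exposed face of `S`: either `F = S` or there is a nonzero affine-linear
function `ℓ` with `ℓ ≥ 0` on `S`, `{ℓ = 0} ∩ S ≠ ∅` and `{ℓ = 0} ∩ S = F`. -/
def IsExposedFaceOf {n : ℕ} (S F : Set (Fin n → ℝ)) : Prop :=
  F = S ∨ ∃ (a : Fin n → ℝ) (c : ℝ), affEval a c ≠ 0 ∧
    (∀ x ∈ S, 0 ≤ affEval a c x) ∧
    ({x | affEval a c x = 0} ∩ S).Nonempty ∧
    {x | affEval a c x = 0} ∩ S = F

/-!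
Extremality is transitive while exposedness is not. The linear form `-y` is maximal on `S`
exactly along the edge `[-1, 0] × {0}`, and `x` is maximal on that edge only at the origin, so the
origin is a face of `S`. The boundary curve `(t, t³)` leaves the origin in the direction `(1, 0)`,
hence a linear form that is maximal on `S` at the origin does not increase in this direction; it is
then also maximal at `(-1, 0)`, and no supporting line meets `S` in the origin alone.
-/

open Filter Set Topology

section Exposed

variable {𝕜 E : Type*} [TopologicalSpace 𝕜] [Semiring 𝕜] [PartialOrder 𝕜]
  [TopologicalSpace E] [AddCommMonoid E] [Module 𝕜 E]

theorem isExposed_sep_eq_of_forall_le {A : Set E} {l : StrongDual 𝕜 E} {c : 𝕜}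
    (hl : ∀ x ∈ A, l x ≤ c) : IsExposed 𝕜 A {x ∈ A | l x = c} := by
  rintro ⟨p, hpA, hpc⟩
  refine ⟨l, Set.ext fun x ↦ and_congr_right fun hx ↦ ⟨?_, fun hmax ↦ ?_⟩⟩
  · rintro rfl
    exact hl
  · exact (hl x hx).antisymm (hpc ▸ hmax p hpA)

end Exposed

section TangentCone

variable {E : Type*} [NormedAddCommGroup E] [NormedSpace ℝ E]

theorem mem_posTangentConeAt_of_hasDerivWithinAt {A : Set E} {γ : ℝ → E} {v : E} {t₀ : ℝ}
    (hγ : HasDerivWithinAt γ v (Ioi t₀) t₀) (hA : ∃ᶠ t in 𝓝[>] t₀, γ t ∈ A) :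
    v ∈ posTangentConeAt A (γ t₀) := by
  have hslope : Tendsto (slope γ t₀) (𝓝[>] t₀) (𝓝 v) :=
    (hasDerivWithinAt_iff_tendsto_slope' self_notMem_Ioi).1 hγ
  refine mem_tangentConeAt_of_frequently (𝓝[>] t₀) (fun t ↦ (t - t₀)⁻¹.toNNReal)
    (fun t ↦ γ t - γ t₀) ?_ ?_ ?_
  · exact tendsto_sub_nhds_zero_iff.2 hγ.continuousWithinAt
  · simpa only [add_sub_cancel] using hA
  · refine hslope.congr' ?_
    filter_upwards [self_mem_nhdsWithin] with t ht
    have hinv : 0 ≤ (t - t₀)⁻¹ := inv_nonneg.2 (sub_nonneg.2 (mem_Ioi.1 ht).le)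
    rw [NNReal.smul_def, Real.coe_toNNReal _ hinv, slope_def_module]

theorem sub_mem_of_isExposed_of_mem_posTangentConeAt {A B : Set E} (hAB : IsExposed ℝ A B)
    {p v : E} (hp : p ∈ B) (hv : v ∈ posTangentConeAt A p) (hpv : p - v ∈ A) : p - v ∈ B := by
  obtain ⟨l, rfl⟩ := hAB ⟨p, hp⟩
  obtain ⟨-, hmax⟩ := hp
  have hlv : l v ≤ 0 :=
    (show IsMaxOn l A p from hmax).localize.hasFDerivWithinAt_nonpos l.hasFDerivWithinAt hv
  refine ⟨hpv, fun y hy ↦ ?_⟩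
  calc
    l y ≤ l p := hmax y hy
    _ ≤ l p - l v := by linarith
    _ = l (p - v) := (map_sub l p v).symm

end TangentCone

section Faces

variable {n : ℕ} {S F : Set (Fin n → ℝ)}

theorem isFaceOf_iff_isExtreme : IsFaceOf S F ↔ F.Nonempty ∧ Convex ℝ F ∧ IsExtreme ℝ S F := by
  refine and_congr_right fun _ ↦ and_congr_right fun _ ↦ ⟨?_, fun hF ↦ ⟨hF.subset, ?_⟩⟩
  · rintro ⟨hFS, hface⟩
    refine ⟨hFS, ?_⟩
    rintro x hx y hy _ hz ⟨s, t, hs, ht, hst, rfl⟩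
    obtain rfl : t = 1 - s := by linarith
    exact (hface x hx y hy s hs (by linarith) hz).1
  · intro x hx y hy s hs hs' hz
    have hmem : s • x + (1 - s) • y ∈ openSegment ℝ x y :=
      ⟨s, 1 - s, hs, sub_pos.2 hs', add_sub_cancel s 1, rfl⟩
    exact ⟨hF.left_mem_of_mem_openSegment hx hy hz hmem,
      hF.right_mem_of_mem_openSegment hx hy hz hmem⟩

theorem IsExposedFaceOf.isExposed (hF : IsExposedFaceOf S F) : IsExposed ℝ S F := by
  obtain rfl | ⟨a, c, -, hnonneg, -, rfl⟩ := hF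
  · exact IsExposed.refl F
  let l : StrongDual ℝ (Fin n → ℝ) := -∑ i, a i • ContinuousLinearMap.proj i
  have haff (x : Fin n → ℝ) : affEval a c x = c - l x := by simp [affEval, l]
  have hle : ∀ x ∈ S, l x ≤ c := fun x hx ↦ sub_nonneg.1 (haff x ▸ hnonneg x hx)
  have hset : {x | affEval a c x = 0} ∩ S = {x ∈ S | l x = c} := by
    ext x
    rw [mem_inter_iff, mem_ofPred_eq, mem_ofPred_eq, haff, sub_eq_zero, and_comm, eq_comm]
  rw [hset]
  exact isExposed_sep_eq_of_forall_le hle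

end Faces

/-- The basic closed set `S = S(t₂ - t₁³, t₁ + 1, t₂, 1 - t₂)` of the theorem, with `t₁ = x 0` and
`t₂ = x 1`. -/
def cubicRegion : Set (Fin 2 → ℝ) :=
  {x | (x 0) ^ 3 ≤ x 1 ∧ -1 ≤ x 0 ∧ 0 ≤ x 1 ∧ x 1 ≤ 1}

/-- The edge `[-1, 0] × {0}` of `cubicRegion`, cut out by its supporting line `t₂ = 0`. -/
def bottomEdge : Set (Fin 2 → ℝ) :=
  {x ∈ cubicRegion | x 1 = 0}

theorem isExposed_cubicRegion_bottomEdge : IsExposed ℝ cubicRegion bottomEdge := by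
  let l : StrongDual ℝ (Fin 2 → ℝ) := -ContinuousLinearMap.proj 1
  have hle : ∀ x ∈ cubicRegion, l x ≤ 0 := fun x hx ↦ neg_nonpos.2 hx.2.2.1
  simpa [bottomEdge, l] using isExposed_sep_eq_of_forall_le hle

theorem apply_zero_nonpos_of_mem_bottomEdge {x : Fin 2 → ℝ} (hx : x ∈ bottomEdge) : x 0 ≤ 0 := by
  obtain ⟨⟨hcube, -⟩, hx1⟩ := hx
  exact (by decide : Odd 3).pow_nonpos_iff.1 (hcube.trans_eq hx1)

theorem isExposed_bottomEdge_singleton_zero : IsExposed ℝ bottomEdge {0} := by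
  let l : StrongDual ℝ (Fin 2 → ℝ) := ContinuousLinearMap.proj 0
  have hle : ∀ x ∈ bottomEdge, l x ≤ 0 := fun x hx ↦ apply_zero_nonpos_of_mem_bottomEdge hx
  have hset : {x ∈ bottomEdge | l x = 0} = {0} := by
    refine (subset_singleton_iff.2 ?_).antisymm (singleton_subset_iff.2 ?_)
    · rintro x ⟨⟨-, hx1⟩, hx0⟩
      exact funext (Fin.forall_fin_two.2 ⟨hx0, hx1⟩)
    · simp [bottomEdge, cubicRegion]
  rw [← hset]
  exact isExposed_sep_eq_of_forall_le hle

theorem isExtreme_cubicRegion_singleton_zero : IsExtreme ℝ cubicRegion {0} :=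
  isExposed_cubicRegion_bottomEdge.isExtreme.trans isExposed_bottomEdge_singleton_zero.isExtreme

/-- The part `t₂ = t₁³` of the boundary of `cubicRegion`, as a curve parametrized by `t₁`. -/
def cubicCurve (t : ℝ) : Fin 2 → ℝ :=
  ![t, t ^ 3]

theorem cubicCurve_zero : cubicCurve 0 = 0 := by
  simp [cubicCurve]

theorem cubicCurve_mem_cubicRegion {t : ℝ} (ht : t ∈ Icc (0 : ℝ) 1) :
    cubicCurve t ∈ cubicRegion :=
  ⟨le_rfl, neg_one_lt_zero.le.trans ht.1, pow_nonneg ht.1 3, pow_le_one₀ ht.1 ht.2⟩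

theorem hasDerivAt_cubicCurve_zero : HasDerivAt cubicCurve ![1, 0] 0 := by
  refine hasDerivAt_pi.2 (Fin.forall_fin_two.2 ⟨hasDerivAt_id 0, ?_⟩)
  simpa [cubicCurve] using hasDerivAt_pow 3 (0 : ℝ)

theorem horizontal_mem_posTangentConeAt_cubicRegion : ![1, 0] ∈ posTangentConeAt cubicRegion 0 := by
  have hmem : ∀ᶠ t : ℝ in 𝓝[>] 0, cubicCurve t ∈ cubicRegion := by
    filter_upwards [Ioc_mem_nhdsGT one_pos] with t ht
    exact cubicCurve_mem_cubicRegion (Ioc_subset_Icc_self ht)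
  rw [← cubicCurve_zero]
  exact mem_posTangentConeAt_of_hasDerivWithinAt
    hasDerivAt_cubicCurve_zero.hasDerivWithinAt hmem.frequently

theorem not_isExposed_cubicRegion_singleton_zero : ¬ IsExposed ℝ cubicRegion {0} := by
  intro hexp
  have hcorner : (0 : Fin 2 → ℝ) - ![1, 0] ∈ cubicRegion := by norm_num [cubicRegion]
  have hzero : (0 : Fin 2 → ℝ) - ![1, 0] = 0 :=
    sub_mem_of_isExposed_of_mem_posTangentConeAt hexp rfl
      horizontal_mem_posTangentConeAt_cubicRegion hcorner
  simpa using congrFun hzero 0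

/-- In the basic closed set
`S = S(t₂ - t₁³, t₁ + 1, t₂, 1 - t₂) = {(x,y) | y ≥ x³, x ≥ -1, 0 ≤ y ≤ 1} ⊆ ℝ²`, the
origin is a face of `S` that is not exposed. -/
theorem origin_nonexposed_face :
    IsFaceOf {x : Fin 2 → ℝ | (x 0) ^ 3 ≤ x 1 ∧ -1 ≤ x 0 ∧ 0 ≤ x 1 ∧ x 1 ≤ 1}
        ({0} : Set (Fin 2 → ℝ)) ∧
      ¬ IsExposedFaceOf {x : Fin 2 → ℝ | (x 0) ^ 3 ≤ x 1 ∧ -1 ≤ x 0 ∧ 0 ≤ x 1 ∧ x 1 ≤ 1}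
        ({0} : Set (Fin 2 → ℝ)) := by
  constructor
  · exact isFaceOf_iff_isExtreme.2
      ⟨singleton_nonempty 0, convex_singleton 0, isExtreme_cubicRegion_singleton_zero⟩
  · exact fun hexp ↦ not_isExposed_cubicRegion_singleton_zero hexp.isExposed
end
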